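/- Let B₀, B₁, B₂, r > 0, μ ∈ ℝ^m, and let f : ℝ^m → ℝ^m be twice continuously differentiable such that there exists x with ‖x − μ‖₁ < r for which f is (r, B₁, B₂)-stable at x and |f_i(x)| ≤ B₀ for all i ∈ [m]. Then there exists a continuously differentiable function f⋆ : ℝ^m → ℝ^m such that f⋆(x') = f(x') for all x' with ‖x' − μ‖₁ < r, and for all x' ∈ ℝ^m and all i, j ∈ [m] one has |f⋆_i(x')| ≤ B₀ + 2rB₁ + 2r²B₂ and |∂f⋆_i/∂x_j(x')| ≤ 2B₁ + 2rB₂. -/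

import Mathlib

/-!
Write `‖v‖₁ = ∑ k, |v k|` and let `x` be the given point, `‖x - μ‖₁ < r`. The extension is
`f ∘ ρ`, where `ρ` is a `C¹` smoothing of the radial retraction onto the ℓ¹-ball around `μ`.

*Bounds on the ball of radius `2r` around `x`.* Every point `z` of this ball is within `r` of the
midpoint of `x` and `z`, which lies in the ball of radius `r`. The mean value theorem applied to the
first partial derivatives bounds these by `L = B₁ + r B₂` (`pd_le_of_isStable`), and applied to `f`
it bounds `|f_i|` by `B₀ + 2 r L`.

*The retraction.* Replace the ℓ¹-norm by the smooth function `N v = ∑ k, √(v_k² + ε²)`, which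
satisfies `‖v‖₁ ≤ N v ≤ ‖v‖₁ + m ε` and `|∂N/∂v_j| ≤ 1`. Let `p` be a `C¹` function on the line with
`p t = t` for `t ≤ R`, `0 ≤ p' ≤ 1` and `0 ≤ p t ≤ min t (R + s)` for `t ≥ 0` (`cutPrim`), and put
`ρ y = μ + (p (N (y - μ)) / N (y - μ)) • (y - μ)`. With `R = r + m ε`, the map `ρ` is the identity on
the ball of radius `r` around `μ`, and its range lies in the ball of radius `R + s` around `μ`, hence
in the ball of radius `2r` around `x` once `ε` and `s` are small. Each partial derivative
of `ρ` has ℓ¹-norm at most `h + t |h'|`, where `h t = p t / t`; since `t h' = p' - h` this is at most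
`max (p', 2 h - p') ≤ 2`. By the chain rule the partial derivatives of `f ∘ ρ` are at most `2 L`.
-/

open Finset

/-- The partial derivative `∂g/∂x_j` of a function `g : ℝ^m → ℝ` at `x`. -/
noncomputable def pd {m : ℕ} (g : (Fin m → ℝ) → ℝ) (x : Fin m → ℝ) (j : Fin m) : ℝ :=
  fderiv ℝ g x (Pi.single j 1)

/-- `f : ℝ^m → ℝ^m` is `(r, B₁, B₂)`-stable at `x`: all first partial derivatives are bounded
by `B₁` on the ℓ¹-ball of radius `r` around `x`, and all second partial derivatives are bounded
by `B₂` on the ℓ¹-ball of radius `2r` around `x`. -/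
def IsStable {m : ℕ} (r B₁ B₂ : ℝ) (f : (Fin m → ℝ) → Fin m → ℝ) (x : Fin m → ℝ) : Prop :=
  (∀ (i j : Fin m) (x' : Fin m → ℝ), (∑ k, |x' k - x k|) < r →
      |pd (fun y => f y i) x' j| ≤ B₁) ∧
  (∀ (i j j' : Fin m) (x' : Fin m → ℝ), (∑ k, |x' k - x k|) < 2 * r →
      |pd (fun y => pd (fun w => f w i) y j) x' j'| ≤ B₂)

/-! ### Mean value estimates in the ℓ¹-norm -/

theorem fderiv_apply_le {m : ℕ} (g : (Fin m → ℝ) → ℝ) (z v : Fin m → ℝ) (B : ℝ)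
    (h : ∀ j, |pd g z j| ≤ B) : |fderiv ℝ g z v| ≤ B * ∑ k, |v k| := by
  have e : fderiv ℝ g z v = ∑ k, v k * pd g z k := by
    conv_lhs => rw [pi_eq_sum_univ' v]
    simp only [map_sum, map_smul, smul_eq_mul, pd]
  rw [e, Finset.mul_sum]
  refine (Finset.abs_sum_le_sum_abs _ _).trans (Finset.sum_le_sum fun k _ => ?_)
  rw [abs_mul, mul_comm]
  exact mul_le_mul_of_nonneg_right (h k) (abs_nonneg _)

theorem convex_l1ball {m : ℕ} (x : Fin m → ℝ) (R : ℝ) :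
    Convex ℝ {z : Fin m → ℝ | (∑ k, |z k - x k|) < R} := by
  intro a ha b hb α β hα hβ hαβ
  simp only [Set.mem_ofPred_eq] at *
  have h1 : (∑ k, |(α • a + β • b) k - x k|) ≤
      α * (∑ k, |a k - x k|) + β * ∑ k, |b k - x k| := by
    rw [Finset.mul_sum, Finset.mul_sum, ← Finset.sum_add_distrib]
    refine Finset.sum_le_sum fun k _ => ?_
    have : (α • a + β • b) k - x k = α * (a k - x k) + β * (b k - x k) := by
      simp only [Pi.add_apply, Pi.smul_apply, smul_eq_mul]
      linear_combination (x k) * hαβ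
    rw [this]
    refine (abs_add_le _ _).trans ?_
    rw [abs_mul, abs_mul, abs_of_nonneg hα, abs_of_nonneg hβ]
  rcases hα.eq_or_lt with h0 | h0
  · subst h0
    have : β = 1 := by linarith
    subst this
    linarith
  · have h2 := mul_lt_mul_of_pos_left ha h0
    have h3 := mul_le_mul_of_nonneg_left hb.le hβ
    have h4 : α * R + β * R = R := by rw [← add_mul, hαβ, one_mul]
    linarith

theorem abs_sub_le_of_pd {m : ℕ} (g : (Fin m → ℝ) → ℝ) (hg : Differentiable ℝ g)
    (x a b : Fin m → ℝ) (R B : ℝ)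
    (h : ∀ z : Fin m → ℝ, (∑ k, |z k - x k|) < R → ∀ j, |pd g z j| ≤ B)
    (ha : (∑ k, |a k - x k|) < R) (hb : (∑ k, |b k - x k|) < R) :
    |g b - g a| ≤ B * ∑ k, |b k - a k| := by
  obtain ⟨z, hz, e⟩ := domain_mvt (f := g) (f' := fderiv ℝ g) (s := Set.univ)
    (fun y _ => (hg y).hasFDerivAt.hasFDerivWithinAt) convex_univ
    (Set.mem_univ a) (Set.mem_univ b)
  rw [e]
  exact fderiv_apply_le g z _ B (h z ((convex_l1ball x R).segment_subset ha hb hz))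

theorem contDiff_pd {m : ℕ} (g : (Fin m → ℝ) → ℝ) (hg : ContDiff ℝ 2 g) (j : Fin m) :
    ContDiff ℝ 1 (fun y => pd g y j) := by
  unfold pd
  exact (hg.fderiv_right (m := 1) (by norm_num)).clm_apply contDiff_const

/-- Stability at `x` controls the first partial derivatives on the ball of radius `2r` as well:
any point of it is reached from the ball of radius `r` by a step of ℓ¹-length less than `r`. -/
theorem pd_le_of_isStable {m : ℕ} {r B₁ B₂ : ℝ} (hB₂ : 0 < B₂)
    {f : (Fin m → ℝ) → Fin m → ℝ} (hf : ContDiff ℝ 2 f) {x : Fin m → ℝ}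
    (hs : IsStable r B₁ B₂ f x) (z : Fin m → ℝ) (hz : (∑ k, |z k - x k|) < 2 * r)
    (i j : Fin m) : |pd (fun y => f y i) z j| ≤ B₁ + r * B₂ := by
  have hfi : ContDiff ℝ 2 (fun y => f y i) := contDiff_pi.1 hf i
  set a : Fin m → ℝ := fun k => x k + (z k - x k) / 2 with ha
  have ha1 : (∑ k, |a k - x k|) = (∑ k, |z k - x k|) / 2 := by
    rw [Finset.sum_div]
    refine Finset.sum_congr rfl fun k _ => ?_
    simp [ha, abs_div]
  have ha2 : (∑ k, |z k - a k|) = (∑ k, |z k - x k|) / 2 := by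
    rw [Finset.sum_div]
    refine Finset.sum_congr rfl fun k _ => ?_
    have : z k - a k = (z k - x k) / 2 := by simp only [ha]; ring
    rw [this, abs_div, abs_two]
  have h0 : 0 ≤ ∑ k, |z k - x k| := Finset.sum_nonneg fun _ _ => abs_nonneg _
  have h1 := hs.1 i j a (by linarith)
  have h2 := abs_sub_le_of_pd _ ((contDiff_pd _ hfi j).differentiable (by norm_num)) x a z (2 * r) B₂
    (fun w hw j' => hs.2 i j j' w hw) (by linarith) hz
  have h3 : B₂ * (∑ k, |z k - a k|) ≤ B₂ * r := mul_le_mul_of_nonneg_left (by linarith) hB₂.le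
  rw [abs_le] at *
  constructor <;> linarith [h1.1, h1.2, h2.1, h2.2]

/-! ### The one-variable cut-off -/

/-- The continuous piecewise linear weight equal to `1` on `(-∞, R]` and `0` on `[R + s, ∞)`. -/
noncomputable def cutWeight (R s v : ℝ) : ℝ := max 0 (min 1 (1 - (v - R) / s))

/-- The `C¹` function `p t = ∫₀ᵗ cutWeight`, a smoothing of `min t R`. -/
noncomputable def cutPrim (R s t : ℝ) : ℝ := ∫ v in (0 : ℝ)..t, cutWeight R s v

theorem continuous_cutWeight (R s : ℝ) : Continuous (cutWeight R s) := by
  unfold cutWeight; fun_prop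

theorem cutWeight_nonneg (R s v : ℝ) : 0 ≤ cutWeight R s v := le_max_left _ _

theorem cutWeight_le_one (R s v : ℝ) : cutWeight R s v ≤ 1 :=
  max_le zero_le_one (min_le_left _ _)

theorem hasDerivAt_cutPrim (R s t : ℝ) : HasDerivAt (cutPrim R s) (cutWeight R s t) t :=
  intervalIntegral.integral_hasDerivAt_right ((continuous_cutWeight R s).intervalIntegrable _ _)
    (continuous_cutWeight R s).stronglyMeasurable.stronglyMeasurableAtFilter
    (continuous_cutWeight R s).continuousAt

theorem contDiff_cutPrim (R s : ℝ) : ContDiff ℝ 1 (cutPrim R s) := by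
  rw [contDiff_one_iff_deriv]
  refine ⟨fun t => (hasDerivAt_cutPrim R s t).differentiableAt, ?_⟩
  rw [show deriv (cutPrim R s) = cutWeight R s from
    funext fun t => (hasDerivAt_cutPrim R s t).deriv]
  exact continuous_cutWeight R s

theorem cutPrim_nonneg (R s t : ℝ) (ht : 0 ≤ t) : 0 ≤ cutPrim R s t :=
  intervalIntegral.integral_nonneg ht fun v _ => cutWeight_nonneg R s v

theorem cutPrim_le_self (R s t : ℝ) (ht : 0 ≤ t) : cutPrim R s t ≤ t := by
  have := intervalIntegral.integral_mono_on (μ := MeasureTheory.volume) ht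
    ((continuous_cutWeight R s).intervalIntegrable _ _)
    (continuous_const.intervalIntegrable (μ := MeasureTheory.volume) 0 t)
    (fun v _ => cutWeight_le_one R s v)
  simpa [cutPrim] using this

theorem cutPrim_eq_self (R s t : ℝ) (hs : 0 < s) (ht : 0 ≤ t) (htR : t ≤ R) :
    cutPrim R s t = t := by
  have : cutPrim R s t = ∫ _ in (0 : ℝ)..t, (1 : ℝ) := by
    refine intervalIntegral.integral_congr fun v hv => ?_
    rw [Set.uIcc_of_le ht] at hv
    have h1 : (v - R) / s ≤ 0 := div_nonpos_of_nonpos_of_nonneg (by linarith [hv.2]) hs.le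
    simp only [cutWeight]
    rw [min_eq_left (by linarith), max_eq_right zero_le_one]
  rw [this]; simp

theorem cutPrim_le (R s t : ℝ) (hs : 0 < s) (hR : 0 ≤ R) (ht : 0 ≤ t) :
    cutPrim R s t ≤ R + s := by
  rcases le_total t (R + s) with h | h
  · exact (cutPrim_le_self R s t ht).trans h
  · have hi : ∀ a b, IntervalIntegrable (cutWeight R s) MeasureTheory.volume a b :=
      fun a b => (continuous_cutWeight R s).intervalIntegrable a b
    have e : cutPrim R s t = cutPrim R s (R + s) + ∫ v in (R + s)..t, cutWeight R s v :=
      (intervalIntegral.integral_add_adjacent_intervals (hi _ _) (hi _ _)).symm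
    have z : ∫ v in (R + s)..t, cutWeight R s v = ∫ _ in (R + s)..t, (0 : ℝ) := by
      refine intervalIntegral.integral_congr fun v hv => ?_
      rw [Set.uIcc_of_le h] at hv
      have h1 : 1 ≤ (v - R) / s := by
        rw [le_div_iff₀ hs]; linarith [hv.1]
      simp only [cutWeight]
      exact max_eq_left ((min_le_right _ _).trans (by linarith))
    rw [e, z]
    simpa using cutPrim_le_self R s (R + s) (by linarith)

/-! ### The smoothed ℓ¹-norm -/

/-- A smooth function exceeding the ℓ¹-norm by at most `m * ε`. -/
noncomputable def smoothL1 {m : ℕ} (ε : ℝ) (v : Fin m → ℝ) : ℝ := ∑ k, √(v k ^ 2 + ε ^ 2)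

theorem l1_le_smoothL1 {m : ℕ} (ε : ℝ) (v : Fin m → ℝ) : (∑ k, |v k|) ≤ smoothL1 ε v :=
  Finset.sum_le_sum fun k _ => Real.abs_le_sqrt (by nlinarith [sq_nonneg ε])

theorem smoothL1_le {m : ℕ} {ε : ℝ} (hε : 0 < ε) (v : Fin m → ℝ) :
    smoothL1 ε v ≤ (∑ k, |v k|) + m * ε := by
  have : (∑ k, |v k|) + m * ε = ∑ k, (|v k| + ε) := by
    simp [Finset.sum_add_distrib]
  rw [this]
  refine Finset.sum_le_sum fun k _ => ?_
  rw [Real.sqrt_le_left (by positivity)]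
  nlinarith [sq_abs (v k), abs_nonneg (v k), mul_nonneg (abs_nonneg (v k)) hε.le]

theorem smoothL1_pos {m : ℕ} (hm : 0 < m) {ε : ℝ} (hε : 0 < ε) (v : Fin m → ℝ) :
    0 < smoothL1 ε v :=
  Finset.sum_pos (fun k _ => Real.sqrt_pos.2 (by positivity)) ⟨⟨0, hm⟩, Finset.mem_univ _⟩

theorem contDiff_smoothL1 {m : ℕ} {ε : ℝ} (hε : 0 < ε) :
    ContDiff ℝ 1 (smoothL1 ε : (Fin m → ℝ) → ℝ) := by
  unfold smoothL1
  refine ContDiff.sum fun k _ => ?_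
  refine ContDiff.sqrt (by fun_prop) fun v => ?_
  positivity

theorem abs_fderiv_smoothL1_le {m : ℕ} {ε : ℝ} (hε : 0 < ε) (v : Fin m → ℝ) (j : Fin m) :
    |fderiv ℝ (smoothL1 ε) v (Pi.single j 1)| ≤ 1 := by
  have hk : ∀ k : Fin m, HasFDerivAt (fun v : Fin m → ℝ => √(v k ^ 2 + ε ^ 2))
      ((v k / √(v k ^ 2 + ε ^ 2)) • ContinuousLinearMap.proj (R := ℝ) (φ := fun _ : Fin m => ℝ) k)
      v := by
    intro k
    have h1 : HasDerivAt (fun t : ℝ => √(t ^ 2 + ε ^ 2)) (v k / √(v k ^ 2 + ε ^ 2)) (v k) := by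
      have h2 : HasDerivAt (fun t : ℝ => t ^ 2 + ε ^ 2) (2 * v k) (v k) := by
        simpa using (hasDerivAt_pow 2 (v k)).add_const (ε ^ 2)
      convert h2.sqrt (by positivity) using 1
      rw [mul_div_mul_left _ _ two_ne_zero]
    exact HasDerivAt.comp_hasFDerivAt (h₂ := fun t : ℝ => √(t ^ 2 + ε ^ 2)) v h1
      (ContinuousLinearMap.proj (R := ℝ) (φ := fun _ : Fin m => ℝ) k).hasFDerivAt
  have hN : HasFDerivAt (smoothL1 ε : (Fin m → ℝ) → ℝ) _ v :=
    HasFDerivAt.fun_sum (u := Finset.univ) fun k _ => hk k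
  rw [hN.fderiv]
  simp only [_root_.sum_apply, _root_.smul_apply,
    ContinuousLinearMap.proj_apply, smul_eq_mul, Pi.single_apply, mul_ite, mul_one, mul_zero,
    Finset.sum_ite_eq', Finset.mem_univ, if_true]
  have hp : 0 < √(v j ^ 2 + ε ^ 2) := Real.sqrt_pos.2 (by positivity)
  rw [abs_div, abs_of_pos hp, div_le_one hp]
  exact Real.abs_le_sqrt (by nlinarith [sq_nonneg ε])

/-! ### The smoothed radial retraction -/

/-- The factor `p (N v) / N v` by which the retraction scales a displacement `v`. -/
noncomputable def scaleFactor {m : ℕ} (ε R s : ℝ) (v : Fin m → ℝ) : ℝ :=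
  cutPrim R s (smoothL1 ε v) / smoothL1 ε v

/-- The smoothed radial retraction onto the ℓ¹-ball of radius `R + s` around `μ`. -/
noncomputable def retr {m : ℕ} (ε R s : ℝ) (μ y : Fin m → ℝ) : Fin m → ℝ :=
  μ + scaleFactor ε R s (y - μ) • (y - μ)

theorem contDiff_scaleFactor {m : ℕ} (hm : 0 < m) {ε : ℝ} (hε : 0 < ε) (R s : ℝ) :
    ContDiff ℝ 1 (scaleFactor ε R s : (Fin m → ℝ) → ℝ) :=
  ((contDiff_cutPrim R s).comp (contDiff_smoothL1 hε)).div (contDiff_smoothL1 hε)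
    fun v => (smoothL1_pos hm hε v).ne'

theorem contDiff_retr {m : ℕ} (hm : 0 < m) {ε : ℝ} (hε : 0 < ε) (R s : ℝ) (μ : Fin m → ℝ) :
    ContDiff ℝ 1 (retr ε R s μ) := by
  have h : ContDiff ℝ 1 (fun y : Fin m → ℝ => y - μ) := contDiff_id.sub contDiff_const
  exact contDiff_const.add (((contDiff_scaleFactor hm hε R s).comp h).smul h)

theorem l1_retr_sub_le {m : ℕ} (hm : 0 < m) {ε R s : ℝ} (hε : 0 < ε) (hR : 0 ≤ R) (hs : 0 < s)
    (μ y : Fin m → ℝ) : (∑ k, |retr ε R s μ y k - μ k|) ≤ R + s := by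
  have hN := smoothL1_pos hm hε (y - μ)
  have hp := cutPrim_nonneg R s _ hN.le
  have hc : 0 ≤ scaleFactor ε R s (y - μ) := div_nonneg hp hN.le
  have e : (∑ k, |retr ε R s μ y k - μ k|) =
      scaleFactor ε R s (y - μ) * ∑ k, |(y - μ) k| := by
    rw [Finset.mul_sum]
    refine Finset.sum_congr rfl fun k _ => ?_
    simp only [retr, Pi.add_apply, Pi.smul_apply, smul_eq_mul, add_sub_cancel_left]
    rw [abs_mul, abs_of_nonneg hc]
  rw [e]
  calc _ ≤ scaleFactor ε R s (y - μ) * smoothL1 ε (y - μ) :=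
        mul_le_mul_of_nonneg_left (l1_le_smoothL1 ε _) hc
    _ = cutPrim R s (smoothL1 ε (y - μ)) := div_mul_cancel₀ _ hN.ne'
    _ ≤ R + s := cutPrim_le R s _ hs hR hN.le

theorem retr_eq_self {m : ℕ} (hm : 0 < m) {ε r s : ℝ} (hε : 0 < ε) (hs : 0 < s)
    (μ y : Fin m → ℝ) (hy : (∑ k, |y k - μ k|) < r) : retr ε (r + m * ε) s μ y = y := by
  have hN := smoothL1_pos hm hε (y - μ)
  have h1 : smoothL1 ε (y - μ) ≤ r + m * ε := by
    refine (smoothL1_le hε _).trans ?_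
    simp only [Pi.sub_apply]
    linarith
  unfold retr scaleFactor
  rw [cutPrim_eq_self _ s _ hs hN.le h1, div_self hN.ne']
  simp

/-- Each partial derivative of the retraction has ℓ¹-norm at most `2`. -/
theorem l1_fderiv_retr_le {m : ℕ} (hm : 0 < m) {ε R s : ℝ} (hε : 0 < ε)
    (μ y : Fin m → ℝ) (j : Fin m) :
    (∑ k, |fderiv ℝ (retr ε R s μ) y (Pi.single j 1) k|) ≤ 2 := by
  have hsub : HasFDerivAt (fun y : Fin m → ℝ => y - μ) (ContinuousLinearMap.id ℝ _) y :=
    (hasFDerivAt_id y).sub_const μ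
  have hN := smoothL1_pos hm hε (y - μ)
  have hN1 := l1_le_smoothL1 ε (y - μ)
  have hp0 := cutPrim_nonneg R s _ hN.le
  have hp1 := cutPrim_le_self R s _ hN.le
  have hNd := abs_fderiv_smoothL1_le hε (y - μ) j
  have hw0 := cutWeight_nonneg R s (smoothL1 ε (y - μ))
  have hw1 := cutWeight_le_one R s (smoothL1 ε (y - μ))
  have hdN : HasFDerivAt (smoothL1 ε) (fderiv ℝ (smoothL1 ε) (y - μ)) (y - μ) :=
    ((contDiff_smoothL1 hε).differentiable (by norm_num) _).hasFDerivAt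
  have hdh := (hasDerivAt_cutPrim R s (smoothL1 ε (y - μ))).div
    (hasDerivAt_id (smoothL1 ε (y - μ))) hN.ne'
  have hds := (hdh.comp_hasFDerivAt (y - μ) hdN).comp y hsub
  have hd := (hds.smul hsub).const_add μ
  have hd' : HasFDerivAt (retr ε R s μ) _ y := hd
  set v := y - μ with hv
  set N := smoothL1 ε v with hNdef
  set p := cutPrim R s N with hpdef
  set w := cutWeight R s N with hwdef
  set d := fderiv ℝ (smoothL1 ε) v (Pi.single j 1) with hddef
  have e : ∀ k, fderiv ℝ (retr ε R s μ) y (Pi.single j 1) k =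
      p / N * (Pi.single j 1 : Fin m → ℝ) k + (w * N - p) / N ^ 2 * d * v k := by
    intro k
    rw [hd'.fderiv]
    simp [hpdef, hNdef, hv, hddef]
  have hc0 : 0 ≤ p / N := div_nonneg hp0 hN.le
  have hc1 : p / N ≤ 1 := (div_le_one hN).2 hp1
  have hsingle : (∑ k, |(Pi.single j 1 : Fin m → ℝ) k|) = 1 := by
    simp [Pi.single_apply, apply_ite abs]
  have h1 : (∑ k, |fderiv ℝ (retr ε R s μ) y (Pi.single j 1) k|) ≤
      p / N + |(w * N - p) / N ^ 2| * |d| * ∑ k, |v k| := by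
    calc _ ≤ ∑ k, (p / N * |(Pi.single j 1 : Fin m → ℝ) k| +
          |(w * N - p) / N ^ 2| * |d| * |v k|) := by
          refine Finset.sum_le_sum fun k _ => ?_
          rw [e k]
          refine (abs_add_le _ _).trans ?_
          rw [abs_mul, abs_mul, abs_mul, abs_of_nonneg hc0]
      _ = _ := by rw [Finset.sum_add_distrib, ← Finset.mul_sum, ← Finset.mul_sum, hsingle, mul_one]
  have h2 : |(w * N - p) / N ^ 2| * |d| * ∑ k, |v k| ≤ |(w * N - p) / N ^ 2| * 1 * N := by
    gcongr
  have h3 : |(w * N - p) / N ^ 2| * 1 * N = |w - p / N| := by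
    rw [mul_one, ← abs_of_pos hN, ← abs_mul, abs_of_pos hN]
    congr 1
    field_simp
  have h4 : |w - p / N| ≤ 2 - p / N := by
    rw [abs_le]
    constructor <;> linarith
  linarith

theorem stmt18 (m : ℕ) (hm : 0 < m) (B₀ B₁ B₂ r : ℝ)
    (hB₀ : 0 < B₀) (hB₁ : 0 < B₁) (hB₂ : 0 < B₂) (hr : 0 < r)
    (μ : Fin m → ℝ) (f : (Fin m → ℝ) → Fin m → ℝ) (hf : ContDiff ℝ 2 f)
    (hx : ∃ x : Fin m → ℝ, (∑ k, |x k - μ k|) < r ∧ IsStable r B₁ B₂ f x ∧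
      ∀ i, |f x i| ≤ B₀) :
    ∃ fstar : (Fin m → ℝ) → Fin m → ℝ,
      ContDiff ℝ 1 fstar ∧
      (∀ x' : Fin m → ℝ, (∑ k, |x' k - μ k|) < r → fstar x' = f x') ∧
      (∀ (x' : Fin m → ℝ) (i : Fin m), |fstar x' i| ≤ B₀ + 2 * r * B₁ + 2 * r ^ 2 * B₂) ∧
      (∀ (x' : Fin m → ℝ) (i j : Fin m),
        |pd (fun y => fstar y i) x' j| ≤ 2 * B₁ + 2 * r * B₂) := by
  obtain ⟨x, hxμ, hst, hfx⟩ := hx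
  set δ := ∑ k, |x k - μ k| with hδ
  -- `(m + 1) * ε` is half of the room `r - δ` between the ball around `μ` and the one around `x`.
  set ε : ℝ := (r - δ) / (2 * (m + 1)) with hεdef
  have hε : 0 < ε := div_pos (by linarith) (by positivity)
  have hroom : m * ε + ε = (r - δ) / 2 := by
    rw [hεdef]; field_simp
  set ρ := retr ε (r + m * ε) ε μ with hρ
  have hρC : ContDiff ℝ 1 ρ := contDiff_retr hm hε _ _ μ
  have hrange : ∀ y, (∑ k, |ρ y k - x k|) < 2 * r := by
    intro y
    have h1 := l1_retr_sub_le hm hε (R := r + m * ε) (by positivity) hε μ y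
    have h2 : (∑ k, |ρ y k - x k|) ≤ (∑ k, |ρ y k - μ k|) + δ := by
      rw [hδ, ← Finset.sum_add_distrib]
      refine Finset.sum_le_sum fun k _ => ?_
      rw [abs_sub_comm (x k)]
      exact abs_sub_le _ _ _
    linarith
  have hfi : ∀ i, ContDiff ℝ 2 (fun y => f y i) := fun i => contDiff_pi.1 hf i
  have hL : 0 < B₁ + r * B₂ := by positivity
  refine ⟨fun y => f (ρ y), (hf.of_le (by norm_num)).comp hρC, ?_, ?_, ?_⟩
  · intro y hy
    simp only [hρ]
    rw [retr_eq_self hm hε hε μ y hy]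
  · intro y i
    have h1 := abs_sub_le_of_pd _ ((hfi i).differentiable (by norm_num)) x x (ρ y) (2 * r)
      (B₁ + r * B₂) (fun z hz j => pd_le_of_isStable hB₂ hf hst z hz i j) (by simpa using hr)
      (hrange y)
    have h2 := mul_le_mul_of_nonneg_left (hrange y).le hL.le
    have h3 := hfx i
    rw [abs_le] at *
    constructor <;> nlinarith [h1.1, h1.2, h3.1, h3.2]
  · intro y i j
    have hc : fderiv ℝ (fun y => f (ρ y) i) y =
        (fderiv ℝ (fun z => f z i) (ρ y)).comp (fderiv ℝ ρ y) :=
      fderiv_comp y ((hfi i).differentiable (by norm_num) _)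
        (hρC.differentiable (by norm_num) y)
    have h1 := fderiv_apply_le (fun z => f z i) (ρ y) (fderiv ℝ ρ y (Pi.single j 1)) _
      (fun j => pd_le_of_isStable hB₂ hf hst (ρ y) (hrange y) i j)
    have h2 := mul_le_mul_of_nonneg_left
      (l1_fderiv_retr_le hm (R := r + m * ε) (s := ε) hε μ y j) hL.le
    unfold pd
    rw [hc, ContinuousLinearMap.comp_apply]
    linarith
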